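/- Suppose (a_n)_{n≥1} is a nondecreasing sequence of nonnegative reals with ∑ a_n x^n convergent for |x| < 1, and for some α > 1 and A ≥ 0, ∑_{n=1}^∞ a_n x^n ~ A/(1-x)^α as x ↑ 1. Then a_n ~ (Aα/Γ(α+1))·n^{α-1} as n → ∞. -/

import Mathlib

open Filter Real

lemma kar_summable (b : ℕ → ℝ) (hb : ∀ n, 0 ≤ b n)
    (hs : ∀ x : ℝ, |x| < 1 → Summable (fun n : ℕ => b n * x ^ (n+1)))
    (g : ℝ → ℝ) (M : ℝ) (hM : ∀ u ∈ Set.Icc (0:ℝ) 1, |g u| ≤ M)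
    (y : ℝ) (hy0 : 0 < y) (hy1 : y < 1) :
    Summable (fun k : ℕ => b k * y ^ (k+1) * g (y ^ (k+1))) := by
  have h1 := (hs y (by rw [abs_of_pos hy0]; exact hy1)).mul_right M
  refine Summable.of_norm_bounded h1 (fun k => ?_)
  have h2 : 0 ≤ b k * y ^ (k+1) := mul_nonneg (hb k) (by positivity)
  rw [Real.norm_eq_abs, abs_mul, abs_of_nonneg h2]
  exact mul_le_mul_of_nonneg_left (hM _ ⟨by positivity, pow_le_one₀ hy0.le hy1.le⟩) h2

lemma kar_bdd (g : ℝ → ℝ) (hg : Continuous g) :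
    ∃ M : ℝ, ∀ u ∈ Set.Icc (0:ℝ) 1, |g u| ≤ M := by
  obtain ⟨M, hM⟩ := (isCompact_Icc (a := (0:ℝ)) (b := 1)).exists_bound_of_continuousOn
    hg.continuousOn
  exact ⟨M, fun u hu => by simpa using hM u hu⟩

lemma kar_integrable (α : ℝ) (hα : 0 < α) (g : ℝ → ℝ) (hg : Continuous g) :
    MeasureTheory.IntegrableOn (fun t : ℝ => t ^ (α-1) * rexp (-t) * g (rexp (-t)))
      (Set.Ioi 0) := by
  obtain ⟨M, hM⟩ := kar_bdd g hg
  have h1 := Real.GammaIntegral_convergent hα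
  have h2 : MeasureTheory.IntegrableOn (fun t : ℝ => rexp (-t) * t ^ (α-1) * g (rexp (-t)))
      (Set.Ioi 0) := by
    refine MeasureTheory.Integrable.mul_bdd (c := M) h1 ?_ ?_
    · exact (hg.comp (by fun_prop)).aestronglyMeasurable
    · refine (MeasureTheory.ae_restrict_iff' measurableSet_Ioi).2 (Filter.Eventually.of_forall ?_)
      intro t ht
      have ht' : 0 < t := ht
      exact hM _ ⟨(exp_pos _).le, by simpa using ht'.le⟩
  refine h2.congr_fun (fun t _ => ?_) measurableSet_Ioi
  ring

lemma kar_exp_lt (n : ℕ) (hn : 1 ≤ n) : rexp (-1 / (n:ℝ)) < 1 := by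
  have : (0:ℝ) < n := by exact_mod_cast hn
  rw [Real.exp_lt_one_iff]
  exact div_neg_of_neg_of_pos (by norm_num) this

lemma kar_one_sub (c : ℝ) :
    Tendsto (fun n : ℕ => (n:ℝ) * (1 - rexp (-c / (n:ℝ)))) atTop (nhds c) := by
  have hd : HasDerivAt (fun s : ℝ => 1 - rexp (-c * s)) c 0 := by
    have h1 : HasDerivAt (fun s : ℝ => -c * s) (-c) 0 := by
      simpa using (hasDerivAt_id (0:ℝ)).const_mul (-c)
    simpa using (h1.exp).const_sub 1
  have h2 := hd.tendsto_slope_zero_right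
  have h3 : Tendsto (fun n : ℕ => ((n:ℝ))⁻¹) atTop (nhdsWithin 0 (Set.Ioi 0)) :=
    tendsto_inv_atTop_nhdsGT_zero.comp tendsto_natCast_atTop_atTop
  have h4 := h2.comp h3
  refine h4.congr (fun n => ?_)
  simp [div_eq_mul_inv]

lemma kar_monomial (b : ℕ → ℝ) (α A : ℝ) (hα : 0 < α)
    (hF : Tendsto (fun x : ℝ => (1-x) ^ α * ∑' n : ℕ, b n * x ^ (n+1))
      (nhdsWithin 1 (Set.Iio 1)) (nhds A)) (m : ℕ) :
    Tendsto (fun n : ℕ => (n:ℝ) ^ (-α) *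
        ∑' k : ℕ, b k * rexp (-1 / (n:ℝ)) ^ (k+1) * (rexp (-1 / (n:ℝ)) ^ (k+1)) ^ m)
      atTop (nhds (A / Gamma α *
        ∫ t in Set.Ioi (0:ℝ), t ^ (α-1) * rexp (-t) * (rexp (-t)) ^ m)) := by
  have hm : (0:ℝ) < (m:ℝ) + 1 := by positivity
  have hI : (∫ t in Set.Ioi (0:ℝ), t ^ (α-1) * rexp (-t) * (rexp (-t)) ^ m)
      = (1 / ((m:ℝ)+1)) ^ α * Gamma α := by
    rw [← Real.integral_rpow_mul_exp_neg_mul_Ioi hα hm]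
    congr 1; ext t
    rw [mul_assoc, ← pow_succ', ← Real.exp_nat_mul]
    push_cast; ring_nf
  rw [hI]
  have hG : Gamma α ≠ 0 := (Gamma_pos_of_pos hα).ne'
  have e1 : A / Gamma α * ((1 / ((m:ℝ)+1)) ^ α * Gamma α) = A * (((m:ℝ)+1) ^ α)⁻¹ := by
    rw [one_div, Real.inv_rpow hm.le]; field_simp
  rw [e1]
  have h1 := kar_one_sub ((m:ℝ)+1)
  have hz : Tendsto (fun n : ℕ => rexp (-((m:ℝ)+1) / (n:ℝ))) atTop
      (nhdsWithin 1 (Set.Iio 1)) := by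
    refine tendsto_nhdsWithin_iff.2 ⟨?_, ?_⟩
    · have : Tendsto (fun n : ℕ => -((m:ℝ)+1) / (n:ℝ)) atTop (nhds 0) :=
        tendsto_const_div_atTop_nhds_zero_nat _
      have h0 := (Real.continuous_exp.tendsto 0).comp this
      rw [Real.exp_zero] at h0
      exact h0
    · filter_upwards [eventually_ge_atTop 1] with n hn
      have : (0:ℝ) < n := by exact_mod_cast hn
      show rexp _ < 1
      rw [Real.exp_lt_one_iff]
      exact div_neg_of_neg_of_pos (by linarith) this
  have h2 := hF.comp hz
  have h3 := h2.mul ((h1.rpow_const (p := α) (Or.inr hα.le)).inv₀ (by positivity))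
  refine h3.congr' ?_
  filter_upwards [eventually_ge_atTop 1, hz.eventually self_mem_nhdsWithin] with n hn hzn
  have hn0 : (0:ℝ) < n := by exact_mod_cast hn
  have hz1 : 0 < 1 - rexp (-((m:ℝ)+1) / (n:ℝ)) := sub_pos.2 hzn
  have e2 : ∀ k : ℕ, b k * rexp (-1 / (n:ℝ)) ^ (k+1) * (rexp (-1 / (n:ℝ)) ^ (k+1)) ^ m
      = b k * rexp (-((m:ℝ)+1) / (n:ℝ)) ^ (k+1) := by
    intro k
    rw [mul_assoc, ← pow_succ', ← pow_mul, mul_comm (k+1) (m+1), pow_mul, ← Real.exp_nat_mul]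
    congr 3
    push_cast; ring
  simp only [Function.comp, e2]
  rw [Real.mul_rpow hn0.le hz1.le, Real.rpow_neg hn0.le]
  have h5 := (Real.rpow_pos_of_pos hz1 α).ne'
  have h6 := (Real.rpow_pos_of_pos hn0 α).ne'
  generalize (1 - rexp (-((m:ℝ)+1) / (n:ℝ))) ^ α = v at *
  field_simp

lemma kar_poly (b : ℕ → ℝ) (hb : ∀ n, 0 ≤ b n)
    (hs : ∀ x : ℝ, |x| < 1 → Summable (fun n : ℕ => b n * x ^ (n+1)))
    (α A : ℝ) (hα : 0 < α)
    (hF : Tendsto (fun x : ℝ => (1-x) ^ α * ∑' n : ℕ, b n * x ^ (n+1))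
      (nhdsWithin 1 (Set.Iio 1)) (nhds A)) (p : Polynomial ℝ) :
    Tendsto (fun n : ℕ => (n:ℝ) ^ (-α) *
        ∑' k : ℕ, b k * rexp (-1 / (n:ℝ)) ^ (k+1) * p.eval (rexp (-1 / (n:ℝ)) ^ (k+1)))
      atTop (nhds (A / Gamma α *
        ∫ t in Set.Ioi (0:ℝ), t ^ (α-1) * rexp (-t) * p.eval (rexp (-t)))) := by
  induction p using Polynomial.induction_on' with
  | add p q hp hq =>
    have h := hp.add hq
    rw [← mul_add, ← MeasureTheory.integral_add (kar_integrable α hα _ p.continuous)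
      (kar_integrable α hα _ q.continuous)] at h
    simp only [Polynomial.eval_add, mul_add] at h ⊢
    refine h.congr' ?_
    filter_upwards [eventually_ge_atTop 1] with n hn
    obtain ⟨M, hM⟩ := kar_bdd _ p.continuous
    obtain ⟨N, hN⟩ := kar_bdd _ q.continuous
    rw [← mul_add, ← Summable.tsum_add
      (kar_summable b hb hs _ M hM _ (exp_pos _) (kar_exp_lt n hn))
      (kar_summable b hb hs _ N hN _ (exp_pos _) (kar_exp_lt n hn))]
  | monomial m c =>
    have h := (kar_monomial b α A hα hF m).const_mul c
    simp only [Polynomial.eval_monomial]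
    have e : ∀ u v w : ℝ, u * v * (c * w) = c * (u * v * w) := by intros; ring
    simp only [e, tsum_mul_left, MeasureTheory.integral_const_mul]
    convert h using 2
    · ring
    · ring

lemma kar_main (b : ℕ → ℝ) (hb : ∀ n, 0 ≤ b n)
    (hs : ∀ x : ℝ, |x| < 1 → Summable (fun n : ℕ => b n * x ^ (n+1)))
    (α A : ℝ) (hα : 0 < α) (hA : 0 ≤ A)
    (hF : Tendsto (fun x : ℝ => (1-x) ^ α * ∑' n : ℕ, b n * x ^ (n+1))
      (nhdsWithin 1 (Set.Iio 1)) (nhds A)) (g : ℝ → ℝ) (hg : Continuous g) :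
    Tendsto (fun n : ℕ => (n:ℝ) ^ (-α) *
        ∑' k : ℕ, b k * rexp (-1 / (n:ℝ)) ^ (k+1) * g (rexp (-1 / (n:ℝ)) ^ (k+1)))
      atTop (nhds (A / Gamma α *
        ∫ t in Set.Ioi (0:ℝ), t ^ (α-1) * rexp (-t) * g (rexp (-t)))) := by
  have hG : 0 < Gamma α := Gamma_pos_of_pos hα
  have hone := kar_poly b hb hs α A hα hF 1
  have hI1 : (∫ t in Set.Ioi (0:ℝ), t ^ (α-1) * rexp (-t)) = Gamma α := by
    rw [Real.Gamma_eq_integral hα]; simp only [mul_comm]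
  simp only [Polynomial.eval_one, mul_one] at hone
  rw [hI1, div_mul_cancel₀ _ hG.ne'] at hone
  rw [Metric.tendsto_atTop']
  suffices H : ∀ ε > 0, ∀ᶠ n : ℕ in atTop, dist ((n:ℝ) ^ (-α) *
        ∑' k : ℕ, b k * rexp (-1 / (n:ℝ)) ^ (k+1) * g (rexp (-1 / (n:ℝ)) ^ (k+1)))
      (A / Gamma α *
        ∫ t in Set.Ioi (0:ℝ), t ^ (α-1) * rexp (-t) * g (rexp (-t))) < ε by
    intro ε hε
    obtain ⟨N, hN⟩ := eventually_atTop.1 (H ε hε)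
    exact ⟨N, fun n hn => hN n hn.le⟩
  intro ε hε
  set η : ℝ := ε / (2 * A + 3) with hη
  have hη0 : 0 < η := by positivity
  obtain ⟨p, hp⟩ := exists_polynomial_near_of_continuousOn 0 1 g hg.continuousOn η hη0
  have hpp := kar_poly b hb hs α A hα hF p
  have hI : |(A / Gamma α * ∫ t in Set.Ioi (0:ℝ), t ^ (α-1) * rexp (-t) * p.eval (rexp (-t)))
      - A / Gamma α * ∫ t in Set.Ioi (0:ℝ), t ^ (α-1) * rexp (-t) * g (rexp (-t))| ≤ A * η := by
    rw [← mul_sub, ← MeasureTheory.integral_sub (kar_integrable α hα _ p.continuous)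
      (kar_integrable α hα _ hg), abs_mul, abs_of_nonneg (by positivity)]
    have hint : MeasureTheory.IntegrableOn (fun t : ℝ => t ^ (α-1) * rexp (-t) * η)
      (Set.Ioi 0) := kar_integrable α hα (fun _ => η) continuous_const
    have : |∫ t in Set.Ioi (0:ℝ), (t ^ (α-1) * rexp (-t) * p.eval (rexp (-t))
        - t ^ (α-1) * rexp (-t) * g (rexp (-t)))| ≤ Gamma α * η := by
      rw [← hI1, ← MeasureTheory.integral_mul_const, ← Real.norm_eq_abs]
      refine MeasureTheory.norm_integral_le_of_norm_le hint ?_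
      refine (MeasureTheory.ae_restrict_iff' measurableSet_Ioi).2
        (Filter.Eventually.of_forall ?_)
      intro t ht
      have ht' : 0 < t := ht
      have h0 : 0 ≤ t ^ (α-1) * rexp (-t) := by positivity
      rw [← mul_sub, Real.norm_eq_abs, abs_mul, abs_of_nonneg h0]
      exact mul_le_mul_of_nonneg_left
        (hp _ ⟨(exp_pos _).le, by simpa using ht'.le⟩).le h0
    calc _ ≤ A / Gamma α * (Gamma α * η) := mul_le_mul_of_nonneg_left this (by positivity)
      _ = A * η := by field_simp
  have hS : ∀ n : ℕ, 1 ≤ n → |(n:ℝ) ^ (-α) *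
        (∑' k : ℕ, b k * rexp (-1 / (n:ℝ)) ^ (k+1) * g (rexp (-1 / (n:ℝ)) ^ (k+1)))
      - (n:ℝ) ^ (-α) * ∑' k : ℕ, b k * rexp (-1 / (n:ℝ)) ^ (k+1) *
        p.eval (rexp (-1 / (n:ℝ)) ^ (k+1))| ≤
      ((n:ℝ) ^ (-α) * ∑' k : ℕ, b k * rexp (-1 / (n:ℝ)) ^ (k+1)) * η := by
    intro n hn
    have hy1 := kar_exp_lt n hn
    have hy0 := exp_pos (-1 / (n:ℝ))
    set y := rexp (-1 / (n:ℝ))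
    obtain ⟨M, hM⟩ := kar_bdd _ p.continuous
    obtain ⟨N, hN⟩ := kar_bdd _ hg
    rw [← mul_sub, ← Summable.tsum_sub (kar_summable b hb hs _ N hN _ hy0 hy1)
      (kar_summable b hb hs _ M hM _ hy0 hy1), abs_mul, abs_of_nonneg (by positivity), mul_assoc,
      ← tsum_mul_right]
    refine mul_le_mul_of_nonneg_left ?_ (by positivity)
    rw [← Real.norm_eq_abs]
    refine tsum_of_norm_bounded
      ((hs y (by rw [abs_of_pos hy0]; exact hy1)).mul_right η).hasSum (fun k => ?_)
    have h2 : 0 ≤ b k * y ^ (k+1) := mul_nonneg (hb k) (by positivity)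
    rw [← mul_sub, Real.norm_eq_abs, abs_mul, abs_of_nonneg h2, abs_sub_comm]
    exact mul_le_mul_of_nonneg_left (hp _ ⟨by positivity, pow_le_one₀ hy0.le hy1.le⟩).le h2
  filter_upwards [eventually_ge_atTop 1, hone.eventually (gt_mem_nhds (lt_add_one A)),
    Metric.tendsto_nhds.1 hpp η hη0] with n hn h1 h2
  have h3 := hS n hn
  rw [Real.dist_eq] at h2 ⊢
  have h4 := mul_le_mul_of_nonneg_right h1.le hη0.le
  have h5 : (2 * A + 3) * η = ε := by rw [hη]; field_simp
  rw [abs_lt] at *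
  rw [abs_le] at *
  constructor <;> nlinarith [h2.1, h2.2, h3.1, h3.2, hI.1, hI.2]

/-- bump function -/
def karBump (p q u : ℝ) : ℝ := max 0 ((u - p) * (q - u))

lemma karBump_cont (p q : ℝ) : Continuous (karBump p q) := by
  unfold karBump; fun_prop

lemma karBump_nonneg (p q u : ℝ) : 0 ≤ karBump p q u := le_max_left _ _

lemma karBump_supp (c d t : ℝ) (hcd : c < d)
    (h : karBump (rexp (-d)) (rexp (-c)) (rexp (-t)) ≠ 0) : c < t ∧ t < d := by
  have hpq : rexp (-d) < rexp (-c) := by simpa using hcd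
  by_contra hne
  apply h
  unfold karBump
  apply max_eq_left
  rw [not_and_or, not_lt, not_lt] at hne
  rcases hne with h1 | h1
  · have : rexp (-c) ≤ rexp (-t) := by simpa using h1
    nlinarith
  · have : rexp (-t) ≤ rexp (-d) := by simpa using h1
    nlinarith

lemma karBump_pos (c d t : ℝ) (h1 : c < t) (h2 : t < d) :
    0 < karBump (rexp (-d)) (rexp (-c)) (rexp (-t)) := by
  have : rexp (-d) < rexp (-t) := by simpa using h2
  have : rexp (-t) < rexp (-c) := by simpa using h1
  unfold karBump
  apply lt_max_of_lt_right
  apply mul_pos <;> linarith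

lemma kar_J_pos (c d : ℝ) (hc : 0 < c) (hcd : c < d) :
    0 < ∫ t in Set.Ioi (0:ℝ), t ^ ((1:ℝ)-1) * rexp (-t) *
      karBump (rexp (-d)) (rexp (-c)) (rexp (-t)) := by
  rw [MeasureTheory.setIntegral_pos_iff_support_of_nonneg_ae]
  · refine lt_of_lt_of_le ?_ (MeasureTheory.measure_mono (s := Set.Ioo c d) ?_)
    · simpa using hcd
    · intro t ht
      have ht0 : 0 < t := hc.trans ht.1
      refine ⟨?_, ht0⟩
      have := karBump_pos c d t ht.1 ht.2
      exact (by positivity : (0:ℝ) < t ^ ((1:ℝ)-1) * rexp (-t) *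
        karBump (rexp (-d)) (rexp (-c)) (rexp (-t))).ne'
  · refine (MeasureTheory.ae_restrict_iff' measurableSet_Ioi).2 (Filter.Eventually.of_forall ?_)
    intro t ht
    have ht' : 0 < t := ht
    have := karBump_nonneg (rexp (-d)) (rexp (-c)) (rexp (-t))
    show (0:ℝ) ≤ _
    positivity
  · exact kar_integrable 1 one_pos _ (karBump_cont _ _)

lemma kar_I_bounds (α c d : ℝ) (hα : 1 < α) (hc : 0 < c) (hcd : c < d) :
    c ^ (α-1) * (∫ t in Set.Ioi (0:ℝ), t ^ ((1:ℝ)-1) * rexp (-t) *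
      karBump (rexp (-d)) (rexp (-c)) (rexp (-t))) ≤
    (∫ t in Set.Ioi (0:ℝ), t ^ (α-1) * rexp (-t) *
      karBump (rexp (-d)) (rexp (-c)) (rexp (-t))) ∧
    (∫ t in Set.Ioi (0:ℝ), t ^ (α-1) * rexp (-t) *
      karBump (rexp (-d)) (rexp (-c)) (rexp (-t))) ≤
    d ^ (α-1) * (∫ t in Set.Ioi (0:ℝ), t ^ ((1:ℝ)-1) * rexp (-t) *
      karBump (rexp (-d)) (rexp (-c)) (rexp (-t))) := by
  have i1 := kar_integrable 1 one_pos _ (karBump_cont (rexp (-d)) (rexp (-c)))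
  have i2 := kar_integrable α (by linarith) _ (karBump_cont (rexp (-d)) (rexp (-c)))
  have key : ∀ t : ℝ, 0 < t → 
      c ^ (α-1) * (t ^ ((1:ℝ)-1) * rexp (-t) * karBump (rexp (-d)) (rexp (-c)) (rexp (-t))) ≤
      t ^ (α-1) * rexp (-t) * karBump (rexp (-d)) (rexp (-c)) (rexp (-t)) ∧
      t ^ (α-1) * rexp (-t) * karBump (rexp (-d)) (rexp (-c)) (rexp (-t)) ≤
      d ^ (α-1) * (t ^ ((1:ℝ)-1) * rexp (-t) *
        karBump (rexp (-d)) (rexp (-c)) (rexp (-t))) := by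
    intro t ht
    by_cases h : karBump (rexp (-d)) (rexp (-c)) (rexp (-t)) = 0
    · simp [h]
    · obtain ⟨h1, h2⟩ := karBump_supp c d t hcd h
      have hn : 0 ≤ rexp (-t) * karBump (rexp (-d)) (rexp (-c)) (rexp (-t)) :=
        mul_nonneg (exp_pos _).le (karBump_nonneg _ _ _)
      simp only [sub_self, Real.rpow_zero, one_mul, mul_assoc]
      exact ⟨mul_le_mul_of_nonneg_right (Real.rpow_le_rpow hc.le h1.le (by linarith)) hn,
        mul_le_mul_of_nonneg_right (Real.rpow_le_rpow ht.le h2.le (by linarith)) hn⟩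
  rw [← MeasureTheory.integral_const_mul, ← MeasureTheory.integral_const_mul]
  exact ⟨MeasureTheory.setIntegral_mono_on (i1.const_mul _) i2 measurableSet_Ioi
      (fun t ht => (key t ht).1),
    MeasureTheory.setIntegral_mono_on i2 (i1.const_mul _) measurableSet_Ioi
      (fun t ht => (key t ht).2)⟩

lemma kar_one_F : Tendsto (fun x : ℝ => (1-x) ^ (1:ℝ) * ∑' n : ℕ, (1:ℝ) * x ^ (n+1))
      (nhdsWithin 1 (Set.Iio 1)) (nhds 1) := by
  have h : Tendsto (fun x : ℝ => x) (nhdsWithin 1 (Set.Iio 1)) (nhds 1) :=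
    tendsto_id.mono_left nhdsWithin_le_nhds
  refine h.congr' ?_
  filter_upwards [self_mem_nhdsWithin, h.eventually (lt_mem_nhds one_half_lt_one)] with x hx hx2
  have hx1 : x < 1 := hx
  have hx0 : 0 < x := by linarith
  simp only [one_mul, pow_succ, tsum_mul_right, Real.rpow_one]
  rw [tsum_geometric_of_lt_one hx0.le hx1, ← mul_assoc, mul_inv_cancel₀ (by linarith), one_mul]

lemma kar_one_summable (x : ℝ) (hx : |x| < 1) : Summable (fun n : ℕ => (1:ℝ) * x ^ (n+1)) := by
  simp only [one_mul]
  exact (summable_nat_add_iff 1).2 (summable_geometric_of_abs_lt_one hx)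

lemma kar_supp_idx (c d : ℝ) (hcd : c < d) (n k : ℕ) (hn : 1 ≤ n)
    (h : karBump (rexp (-d)) (rexp (-c)) (rexp (-1 / (n:ℝ)) ^ (k+1)) ≠ 0) :
    c * n < k + 1 ∧ (k:ℝ) + 1 < d * n := by
  have hn0 : (0:ℝ) < n := by exact_mod_cast hn
  have e : rexp (-1 / (n:ℝ)) ^ (k+1) = rexp (-(((k:ℝ)+1)/n)) := by
    rw [← Real.exp_nat_mul]; push_cast; ring_nf
  rw [e] at h
  obtain ⟨h1, h2⟩ := karBump_supp c d _ hcd h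
  exact ⟨(lt_div_iff₀ hn0).1 h1, (div_lt_iff₀ hn0).1 h2⟩

/-- limit of ratio of weighted sums. -/
lemma kar_ratio (b : ℕ → ℝ) (hb : ∀ n, 0 ≤ b n)
    (hs : ∀ x : ℝ, |x| < 1 → Summable (fun n : ℕ => b n * x ^ (n+1)))
    (α A : ℝ) (hα : 1 < α) (hA : 0 ≤ A)
    (hF : Tendsto (fun x : ℝ => (1-x) ^ α * ∑' n : ℕ, b n * x ^ (n+1))
      (nhdsWithin 1 (Set.Iio 1)) (nhds A)) (c d : ℝ) (hc : 0 < c) (hcd : c < d) :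
    ∃ L : ℝ, A / Gamma α * c ^ (α-1) ≤ L ∧ L ≤ A / Gamma α * d ^ (α-1) ∧
      ∃ P Q : ℕ → ℝ, 
      (∀ n, P n = ∑' k : ℕ, b k * rexp (-1 / (n:ℝ)) ^ (k+1) *
        karBump (rexp (-d)) (rexp (-c)) (rexp (-1 / (n:ℝ)) ^ (k+1))) ∧
      (∀ n, Q n = ∑' k : ℕ, 1 * rexp (-1 / (n:ℝ)) ^ (k+1) *
        karBump (rexp (-d)) (rexp (-c)) (rexp (-1 / (n:ℝ)) ^ (k+1))) ∧
      (∀ᶠ n in atTop, 0 < Q n) ∧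
      Tendsto (fun n : ℕ => (n:ℝ) ^ (1-α) * (P n / Q n)) atTop (nhds L) := by
  have hG : 0 < Gamma α := Gamma_pos_of_pos (by linarith)
  have hJ := kar_J_pos c d hc hcd
  obtain ⟨hI1, hI2⟩ := kar_I_bounds α c d hα hc hcd
  have T1 := kar_main b hb hs α A (by linarith) hA hF _ (karBump_cont (rexp (-d)) (rexp (-c)))
  have T2 := kar_main (fun _ => 1) (fun _ => zero_le_one) kar_one_summable 1 1 one_pos
    zero_le_one kar_one_F _ (karBump_cont (rexp (-d)) (rexp (-c)))
  rw [Real.Gamma_one, div_one, one_mul] at T2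
  set J := ∫ t in Set.Ioi (0:ℝ), t ^ ((1:ℝ)-1) * rexp (-t) *
      karBump (rexp (-d)) (rexp (-c)) (rexp (-t))
  set I := ∫ t in Set.Ioi (0:ℝ), t ^ (α-1) * rexp (-t) *
      karBump (rexp (-d)) (rexp (-c)) (rexp (-t))
  refine ⟨A / Gamma α * I / J, ?_, ?_, _, _, fun n => rfl, fun n => rfl, ?_, ?_⟩
  · rw [le_div_iff₀ hJ, mul_assoc]
    exact mul_le_mul_of_nonneg_left hI1 (by positivity)
  · rw [div_le_iff₀ hJ, mul_assoc]
    exact mul_le_mul_of_nonneg_left hI2 (by positivity)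
  · filter_upwards [T2.eventually (lt_mem_nhds hJ)] with n hn
    exact pos_of_mul_pos_right hn (by positivity)
  · refine (T1.div T2 hJ.ne').congr' ?_
    filter_upwards [eventually_ge_atTop 1] with n hn
    have hn0 : (0:ℝ) < n := by exact_mod_cast hn
    have e : (n:ℝ) ^ (1-α) = (n:ℝ) ^ (-α) / (n:ℝ) ^ (-1:ℝ) := by
      rw [← Real.rpow_sub hn0]; ring_nf
    rw [e, div_mul_div_comm]
    rfl

theorem hardy_littlewood_tauberian_monotone (a : ℕ → ℝ)
    (hpos : ∀ n, 1 ≤ n → 0 ≤ a n)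
    (hmono : ∀ m n : ℕ, 1 ≤ m → m ≤ n → a m ≤ a n)
    (hconv : ∀ x : ℝ, |x| < 1 → Summable (fun n : ℕ => a (n+1) * x ^ (n+1)))
    (α A : ℝ) (hα : 1 < α) (hA : 0 ≤ A)
    (hasymp : Tendsto (fun x : ℝ => (∑' n : ℕ, a (n+1) * x ^ (n+1)) / (A / (1-x) ^ α))
      (nhdsWithin 1 (Set.Iio 1)) (nhds 1)) :
    Tendsto (fun n : ℕ => a n / (A * α / Real.Gamma (α+1) * (n:ℝ) ^ (α-1)))
      atTop (nhds 1) := by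
  have hA0 : 0 < A := by
    rcases hA.eq_or_lt with h | h
    · subst h
      simp only [zero_div, div_zero] at hasymp
      exact absurd (tendsto_nhds_unique hasymp tendsto_const_nhds) one_ne_zero
    · exact h
  have hG : 0 < Gamma α := Gamma_pos_of_pos (by linarith)
  set b : ℕ → ℝ := fun n => a (n+1) with hbdef
  have hb : ∀ n, 0 ≤ b n := fun n => hpos _ (by omega)
  have hF : Tendsto (fun x : ℝ => (1-x) ^ α * ∑' n : ℕ, b n * x ^ (n+1))
      (nhdsWithin 1 (Set.Iio 1)) (nhds A) := by
    have h := hasymp.const_mul A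
    rw [mul_one] at h
    refine h.congr' ?_
    filter_upwards [self_mem_nhdsWithin] with x hx
    have hx1 : 0 < 1 - x := sub_pos.2 hx
    have := (Real.rpow_pos_of_pos hx1 α).ne'
    field_simp
    rfl
  set C := A / Gamma α with hC
  have hC0 : 0 < C := by positivity
  have hCe : A * α / Real.Gamma (α+1) = C := by
    rw [Real.Gamma_add_one (by linarith), hC]
    have : α ≠ 0 := by linarith
    field_simp
  have hcont : Tendsto (fun s : ℝ => C * s ^ (α-1)) (nhds 1) (nhds C) := by
    have : ContinuousAt (fun s : ℝ => C * s ^ (α-1)) 1 :=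
      continuousAt_const.mul (Real.continuousAt_rpow_const 1 (α-1) (Or.inl one_ne_zero))
    simpa [ContinuousAt] using this
  have hbd : ∀ c d : ℝ, ∃ M : ℝ, ∀ u ∈ Set.Icc (0:ℝ) 1,
      |karBump (rexp (-d)) (rexp (-c)) u| ≤ M := fun c d => kar_bdd _ (karBump_cont _ _)
  suffices H : Tendsto (fun n : ℕ => (n:ℝ) ^ (1-α) * a n) atTop (nhds C) by
    have h := H.div_const C
    rw [div_self hC0.ne'] at h
    refine h.congr' ?_
    filter_upwards [eventually_ge_atTop 1] with n hn
    have hn0 : (0:ℝ) < n := by exact_mod_cast hn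
    have e : (n:ℝ) ^ (1-α) = ((n:ℝ) ^ (α-1))⁻¹ := by
      rw [← Real.rpow_neg hn0.le]; ring_nf
    have := (Real.rpow_pos_of_pos hn0 (α-1)).ne'
    rw [hCe, e]; field_simp
  refine tendsto_order.2 ⟨fun l hl => ?_, fun l hl => ?_⟩
  · have h1 : ∀ᶠ s in nhdsWithin (1:ℝ) (Set.Iio 1), l < C * s ^ (α-1) :=
      (hcont.mono_left nhdsWithin_le_nhds).eventually (lt_mem_nhds hl)
    have h2 : ∀ᶠ s in nhdsWithin (1:ℝ) (Set.Iio 1), 0 < s :=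
      (tendsto_id.mono_left nhdsWithin_le_nhds).eventually (lt_mem_nhds one_pos)
    obtain ⟨c, ⟨hc1, hc0⟩, hc⟩ := ((h1.and h2).and self_mem_nhdsWithin).exists
    have hc : c < 1 := hc
    obtain ⟨L, hL1, hL2, P, Q, hP, hQ, hQpos, hT⟩ :=
      kar_ratio b hb hconv α A hα hA hF c 1 hc0 hc
    obtain ⟨M, hM⟩ := hbd c 1
    filter_upwards [hT.eventually (lt_mem_nhds (hc1.trans_le hL1)), hQpos,
      eventually_ge_atTop 1] with n hn hq hn1
    refine hn.trans_le (mul_le_mul_of_nonneg_left ?_ (by positivity))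
    rw [div_le_iff₀ hq, hP, hQ, ← tsum_mul_left]
    refine Summable.tsum_le_tsum (fun k => ?_)
      (kar_summable b hb hconv _ M hM _ (exp_pos _) (kar_exp_lt n hn1))
      ((kar_summable (fun _ => 1) (fun _ => zero_le_one) kar_one_summable _ M hM _
        (exp_pos _) (kar_exp_lt n hn1)).mul_left _)
    by_cases h : karBump (rexp (-1)) (rexp (-c)) (rexp (-1 / (n:ℝ)) ^ (k+1)) = 0
    · simp [h]
    · have h3 := (kar_supp_idx c 1 hc n k hn1 h).2
      rw [one_mul] at h3
      have h4 : k + 1 ≤ n := by exact_mod_cast h3.le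
      rw [one_mul, mul_assoc]
      exact mul_le_mul_of_nonneg_right (hmono _ _ (by omega) h4)
        (mul_nonneg (by positivity) (karBump_nonneg _ _ _))
  · have h1 : ∀ᶠ s in nhdsWithin (1:ℝ) (Set.Ioi 1), C * s ^ (α-1) < l :=
      (hcont.mono_left nhdsWithin_le_nhds).eventually (gt_mem_nhds hl)
    obtain ⟨d, hd1, hd⟩ := (h1.and self_mem_nhdsWithin).exists
    have hd : 1 < d := hd
    obtain ⟨L, hL1, hL2, P, Q, hP, hQ, hQpos, hT⟩ :=
      kar_ratio b hb hconv α A hα hA hF 1 d one_pos hd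
    obtain ⟨M, hM⟩ := hbd 1 d
    filter_upwards [hT.eventually (gt_mem_nhds (hL2.trans_lt hd1)), hQpos,
      eventually_ge_atTop 1] with n hn hq hn1
    refine lt_of_le_of_lt (mul_le_mul_of_nonneg_left ?_ (by positivity)) hn
    rw [le_div_iff₀ hq, hP, hQ, ← tsum_mul_left]
    refine Summable.tsum_le_tsum (fun k => ?_)
      ((kar_summable (fun _ => 1) (fun _ => zero_le_one) kar_one_summable _ M hM _
        (exp_pos _) (kar_exp_lt n hn1)).mul_left _)
      (kar_summable b hb hconv _ M hM _ (exp_pos _) (kar_exp_lt n hn1))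
    by_cases h : karBump (rexp (-d)) (rexp (-1)) (rexp (-1 / (n:ℝ)) ^ (k+1)) = 0
    · simp [h]
    · have h3 := (kar_supp_idx 1 d hd n k hn1 h).1
      rw [one_mul] at h3
      have h4 : n ≤ k + 1 := by exact_mod_cast h3.le
      rw [one_mul, mul_assoc (b k)]
      exact mul_le_mul_of_nonneg_right (hmono _ _ hn1 h4)
        (mul_nonneg (by positivity) (karBump_nonneg _ _ _))
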